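/- arXiv:2109.09877 — 3 statements merged into one kernel-verified Lean document; each statement's English description precedes it below -/
import Mathlib

section
/- Let p > 3 be a prime. Then ∑_{k=1}^{(p-1)/2} (p/2 - k)·H(2;k)/((p+1-2k)(p+2k)) ≡ 4·q_p(2) - (7/8)·B_{p-3} modulo p (as rational numbers). -/
/-- Two rationals `a` and `b` are congruent modulo `p^r`:
the `p`-adic valuation of `a - b` is at least `r`, i.e. `a - b = c * p^r`
with the denominator of `c` not divisible by `p`. -/
def ratCongr (p r : ℕ) (a b : ℚ) : Prop :=
  ∃ c : ℚ, a - b = c * (p : ℚ) ^ r ∧ ¬ (p ∣ c.den)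

/-- The Fermat quotient `q_p(2) = (2^(p-1) - 1)/p` (an integer for odd primes),
viewed as a rational number. -/
def fermatQ (p : ℕ) : ℚ := ((2 : ℚ) ^ (p - 1) - 1) / p

/-- The generalized harmonic number of order 2: `H(2;n) = ∑_{j=1}^n 1/j^2`. -/
def harmonic2 (n : ℕ) : ℚ := ∑ j ∈ Finset.Icc 1 n, 1 / (j : ℚ) ^ 2

/-!
Modulo `p = 2n + 1` the `k`-th summand is half of `H_k / (2k - 1)`, where `H_k = ∑_{j ≤ k} 1/j^2`.
Since `2(n - l) ≡ -(2l + 1)` and `H_n ≡ 0`, the reflection `k ↦ n + 1 - k` turns `H_k` into an odd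
harmonic number `O_j = ∑_{i ≤ j} 1/(2i - 1)^2`; since also `O_n ≡ 0`, partial fractions give
`∑_{k ≤ n} H_k / (2k - 1) ≡ 2 ∑_{j ≤ n} O_j / j + 4 (1 - 1/2 + 1/3 - ⋯ - 1/(p - 1))`.

The factor `7/8` comes from computing `T = ∑_{b < p} H_b / b` in two ways. As `b ↦ p - b` takes
`H_b / b` to `H_b / b - 1/b^3`, the sum may be taken over `b ≤ n` or over the even `b < p`, and the
duplication formula `H_{2j} = O_j + H_j / 4` then yields `∑_{j ≤ n} O_j / j ≡ (1 - 1/8) T`.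
Finally, the alternating sum is `2 q_p(2)` because `binom(p - 1, k) ≡ (-1)^k`, and Faulhaber's
formula applied to `H_b ≡ ∑_{a ≤ b} a^{p - 3}` gives `T ≡ -B_{p - 3}`.
-/

open Finset

section FiniteSums

variable {M : Type*} [AddCommMonoid M]

theorem sum_Icc_one_reflect (f : ℕ → M) (n : ℕ) :
    ∑ k ∈ Icc 1 n, f (n + 1 - k) = ∑ k ∈ Icc 1 n, f k := by
  rw [← Ico_add_one_right_eq_Icc, sum_Ico_reflect f 1 (by omega), Nat.add_sub_cancel,
    Nat.add_sub_cancel_left]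

theorem sum_Icc_one_two_mul (f : ℕ → M) (n : ℕ) :
    ∑ k ∈ Icc 1 (2 * n), f k = ∑ k ∈ Icc 1 n, (f (2 * k - 1) + f (2 * k)) := by
  induction n with
  | zero => simp
  | succ n ih =>
    rw [show 2 * (n + 1) = 2 * n + 1 + 1 by ring, sum_Icc_succ_top (by omega),
      sum_Icc_succ_top (by omega), ih, sum_Icc_succ_top (by omega), add_assoc]
    rfl

theorem sum_Icc_one_two_mul_eq_sum_add_reflect (f : ℕ → M) (n : ℕ) :
    ∑ k ∈ Icc 1 (2 * n), f k = ∑ k ∈ Icc 1 n, (f k + f (2 * n + 1 - k)) := by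
  simp only [sum_add_distrib, ← Ico_add_one_right_eq_Icc]
  rw [sum_Ico_reflect f 1 (by omega), show 2 * n + 1 + 1 - (n + 1) = n + 1 by omega,
    Nat.add_sub_cancel, sum_Ico_consecutive f (by omega) (by omega)]

theorem sum_Icc_one_two_mul_eq_sum_even_add_reflect (f : ℕ → M) (n : ℕ) :
    ∑ k ∈ Icc 1 (2 * n), f k = ∑ k ∈ Icc 1 n, (f (2 * k) + f (2 * n + 1 - 2 * k)) := by
  rw [sum_Icc_one_two_mul, sum_add_distrib, sum_add_distrib, add_comm,
    ← sum_Icc_one_reflect fun k => f (2 * k - 1)]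
  congr 1
  refine sum_congr rfl fun k hk => congrArg f ?_
  rw [mem_Icc] at hk
  omega

end FiniteSums

section Reduction

variable {F : Type*} [Field F]

/-- The rational number `q` reduces to `z` in the field `F`: its denominator is nonzero in `F`,
and `z` is its image. For `F = ZMod p` this says that `q` is `p`-integral with residue class `z`,
so that `p`-integral identities can be checked in `ZMod p`. -/
structure ReducesTo (q : ℚ) (z : F) : Prop where
  den_ne_zero : (q.den : F) ≠ 0
  cast_eq : (q : F) = z

namespace ReducesTo

variable {q r : ℚ} {y z : F}

theorem natCast (n : ℕ) : ReducesTo (n : ℚ) (n : F) := ⟨by simp, by simp⟩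

theorem one : ReducesTo 1 (1 : F) := by simpa using natCast (F := F) 1

theorem ofNat (n : ℕ) [n.AtLeastTwo] : ReducesTo (OfNat.ofNat n) (OfNat.ofNat n : F) := by
  simpa using natCast (F := F) (OfNat.ofNat n)

theorem neg (hq : ReducesTo q y) : ReducesTo (-q) (-y) :=
  ⟨by simpa using hq.den_ne_zero, by rw [Rat.cast_neg, hq.cast_eq]⟩

theorem add (hq : ReducesTo q y) (hr : ReducesTo r z) : ReducesTo (q + r) (y + z) where
  den_ne_zero := by
    refine ne_zero_of_dvd_ne_zero ?_ (Nat.cast_dvd_cast (Rat.add_den_dvd q r))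
    simpa using ⟨hq.den_ne_zero, hr.den_ne_zero⟩
  cast_eq := by
    rw [Rat.cast_add_of_ne_zero hq.den_ne_zero hr.den_ne_zero, hq.cast_eq, hr.cast_eq]

theorem mul (hq : ReducesTo q y) (hr : ReducesTo r z) : ReducesTo (q * r) (y * z) where
  den_ne_zero := by
    refine ne_zero_of_dvd_ne_zero ?_ (Nat.cast_dvd_cast (Rat.mul_den_dvd q r))
    simpa using ⟨hq.den_ne_zero, hr.den_ne_zero⟩
  cast_eq := by
    rw [Rat.cast_mul_of_ne_zero hq.den_ne_zero hr.den_ne_zero, hq.cast_eq, hr.cast_eq]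

theorem sub (hq : ReducesTo q y) (hr : ReducesTo r z) : ReducesTo (q - r) (y - z) := by
  simpa only [sub_eq_add_neg] using hq.add hr.neg

theorem inv (hq : ReducesTo q y) (hy : y ≠ 0) : ReducesTo q⁻¹ y⁻¹ := by
  have hnum : (q.num : F) ≠ 0 := by
    rintro h
    exact hy (by rw [← hq.cast_eq, Rat.cast_def, h, zero_div])
  refine ⟨?_, by rw [Rat.cast_inv_of_ne_zero hnum, hq.cast_eq]⟩
  have hdvd : (q⁻¹.den : ℤ) ∣ q.num := Rat.inv_def q ▸ Rat.den_dvd _ _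
  exact ne_zero_of_dvd_ne_zero hnum (by exact_mod_cast Int.cast_dvd_cast (α := F) _ _ hdvd)

theorem div (hq : ReducesTo q y) (hr : ReducesTo r z) (hz : z ≠ 0) :
    ReducesTo (q / r) (y / z) := by
  simpa only [div_eq_mul_inv] using hq.mul (hr.inv hz)

theorem pow (hq : ReducesTo q y) (n : ℕ) : ReducesTo (q ^ n) (y ^ n) := by
  induction n with
  | zero => simpa only [pow_zero] using one
  | succ n ih => simpa only [pow_succ] using ih.mul hq

theorem sum {ι : Type*} {s : Finset ι} {f : ι → ℚ} {g : ι → F}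
    (h : ∀ i ∈ s, ReducesTo (f i) (g i)) : ReducesTo (∑ i ∈ s, f i) (∑ i ∈ s, g i) := by
  classical
  induction s using Finset.induction_on with
  | empty => simpa using natCast 0
  | insert a s ha ih =>
    rw [sum_insert ha, sum_insert ha]
    exact (h a (mem_insert_self a s)).add (ih fun i hi => h i (mem_insert_of_mem hi))

theorem ratCongr_one {p : ℕ} [CharP F p] (hq : ReducesTo q z) (hr : ReducesTo r z) :
    ratCongr p 1 q r := by
  obtain ⟨hden, hcast⟩ := hq.sub hr
  rw [sub_self, Rat.cast_def, div_eq_zero_iff, or_iff_left hden,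
    CharP.intCast_eq_zero_iff F p] at hcast
  obtain ⟨c, hc⟩ := hcast
  refine ⟨c / (q - r).den, ?_, fun hdvd => hden ?_⟩
  · rw [pow_one, div_mul_eq_mul_div, mul_comm (c : ℚ)]
    exact_mod_cast (hc ▸ (Rat.num_div_den (q - r)).symm)
  · rw [CharP.cast_eq_zero_iff F p]
    have hle := Rat.den_dvd c (q - r).den
    rw [Rat.divInt_eq_div] at hle
    exact hdvd.trans (by exact_mod_cast hle)

end ReducesTo

end Reduction

section GeneralizedHarmonic

/-- The generalized harmonic number `∑_{j=1}^n 1/j^s` of order `s`, in a field `F` so that it can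
be read both in `ℚ` and modulo `p`. Terms with `j = 0` in `F` are `0` for `s ≠ 0`. -/
def genHarmonic (F : Type*) [Field F] (s n : ℕ) : F := ∑ j ∈ Icc 1 n, 1 / (j : F) ^ s

/-- The odd generalized harmonic number `∑_{j=1}^n 1/(2j-1)^s` of order `s`, into which
`genHarmonic` is turned by reflection modulo `2n + 1` and by duplication. -/
def oddHarmonic (F : Type*) [Field F] (s n : ℕ) : F := ∑ j ∈ Icc 1 n, 1 / (2 * (j : F) - 1) ^ s

/-- The alternating harmonic number `1 - 1/2 + 1/3 - ⋯ ± 1/n`, which for `n = p - 1` is `2 q_p(2)`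
modulo `p`. -/
def altHarmonic (F : Type*) [Field F] (n : ℕ) : F := ∑ j ∈ Icc 1 n, (-1) ^ (j - 1) / (j : F)

/-- The multiple harmonic sum `∑ 1/(a^s b)` over `1 ≤ a ≤ b ≤ n`, which for `n = p - 1` is
`-B_{p-1-s}` modulo `p`. -/
def doubleHarmonic (F : Type*) [Field F] (s n : ℕ) : F := ∑ b ∈ Icc 1 n, genHarmonic F s b / b

variable {F : Type*} [Field F]

theorem genHarmonic_succ (s n : ℕ) :
    genHarmonic F s (n + 1) = genHarmonic F s n + 1 / ((n + 1 : ℕ) : F) ^ s :=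
  sum_Icc_succ_top (by omega) _

theorem oddHarmonic_succ (s n : ℕ) :
    oddHarmonic F s (n + 1) = oddHarmonic F s n + 1 / (2 * ((n + 1 : ℕ) : F) - 1) ^ s :=
  sum_Icc_succ_top (by omega) _

theorem genHarmonic_two_mul (s n : ℕ) :
    genHarmonic F s (2 * n) = oddHarmonic F s n + genHarmonic F s n / 2 ^ s := by
  rw [genHarmonic, sum_Icc_one_two_mul, sum_add_distrib, oddHarmonic, genHarmonic, sum_div]
  congr 1 <;> refine sum_congr rfl fun j hj => ?_
  · rw [Nat.cast_sub (by rw [mem_Icc] at hj; omega)]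
    push_cast
    rfl
  · rw [Nat.cast_mul, mul_pow, div_div, mul_comm, Nat.cast_ofNat]

theorem altHarmonic_two_mul (n : ℕ) :
    altHarmonic F (2 * n) = ∑ j ∈ Icc 1 n, (1 / (2 * (j : F) - 1) - 1 / (2 * (j : F))) := by
  rw [altHarmonic, sum_Icc_one_two_mul]
  refine sum_congr rfl fun j hj => ?_
  rw [mem_Icc] at hj
  have hodd : (-1 : F) ^ (2 * j - 1) = -1 := Odd.neg_one_pow ⟨j - 1, by omega⟩
  have heven : (-1 : F) ^ (2 * j - 1 - 1) = 1 := Even.neg_one_pow ⟨j - 1, by omega⟩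
  rw [hodd, heven, Nat.cast_sub (by omega)]
  push_cast
  ring

theorem reducesTo_genHarmonic {n : ℕ} (hn : ∀ j ∈ Icc 1 n, (j : F) ≠ 0) (s : ℕ) :
    ReducesTo (genHarmonic ℚ s n) (genHarmonic F s n) :=
  .sum fun j hj => by
    simpa using ((ReducesTo.natCast j).pow s).inv (pow_ne_zero s (hn j hj))

section Reflection

variable {n s : ℕ}

theorem genHarmonic_eq_genHarmonic_sub_add {m k : ℕ} (hm : (m : F) + 1 = 0) (hk : k ≤ m) (s : ℕ) :
    genHarmonic F s m = genHarmonic F s (m - k) + (-1) ^ s * genHarmonic F s k := by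
  induction k with
  | zero => simp [genHarmonic]
  | succ k ih =>
    have hterm : 1 / ((m - (k + 1) + 1 : ℕ) : F) ^ s =
        (-1) ^ s * (1 / ((k + 1 : ℕ) : F) ^ s) := by
      have hmk : ((k + 1 : ℕ) : F) = -1 * ((m - (k + 1) + 1 : ℕ) : F) := by
        rw [show m - (k + 1) + 1 = m - k by omega, Nat.cast_sub (by omega)]
        push_cast
        linear_combination hm
      rw [hmk, mul_pow, mul_one_div, div_mul_cancel_left₀ (pow_ne_zero s (by simp)), one_div]
    rw [ih (by omega), genHarmonic_succ s k, mul_add, ← hterm,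
      show m - k = m - (k + 1) + 1 by omega, genHarmonic_succ]
    ring

theorem two_ne_zero_of_two_mul_add_one_eq_zero (hn : 2 * (n : F) + 1 = 0) : (2 : F) ≠ 0 := fun h =>
  one_ne_zero (α := F) (by linear_combination hn - n * h)

theorem genHarmonic_eq_genHarmonic_sub_add_oddHarmonic {m : ℕ} (hn : 2 * (n : F) + 1 = 0)
    (hm : m ≤ n) (s : ℕ) :
    genHarmonic F s n = genHarmonic F s (n - m) + (-2) ^ s * oddHarmonic F s m := by
  induction m with
  | zero => simp [oddHarmonic]
  | succ m ih =>
    have h2 : (-2 : F) ≠ 0 := neg_ne_zero.mpr (two_ne_zero_of_two_mul_add_one_eq_zero hn)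
    have hterm : 1 / ((n - (m + 1) + 1 : ℕ) : F) ^ s =
        (-2) ^ s * (1 / (2 * ((m + 1 : ℕ) : F) - 1) ^ s) := by
      have hnm : 2 * ((m + 1 : ℕ) : F) - 1 = -2 * ((n - (m + 1) + 1 : ℕ) : F) := by
        rw [show n - (m + 1) + 1 = n - m by omega, Nat.cast_sub (by omega)]
        push_cast
        linear_combination hn
      rw [hnm, mul_pow, mul_one_div, div_mul_cancel_left₀ (pow_ne_zero s h2), one_div]
    rw [ih (by omega), oddHarmonic_succ, mul_add, ← hterm,
      show n - m = n - (m + 1) + 1 by omega, genHarmonic_succ]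
    ring

theorem two_mul_sub_one_ne_zero (hne : ∀ j ∈ Icc 1 (2 * n), (j : F) ≠ 0) {k : ℕ}
    (hk : k ∈ Icc 1 n) : 2 * (k : F) - 1 ≠ 0 := by
  rw [mem_Icc] at hk
  have := hne (2 * k - 1) (mem_Icc.mpr (by omega))
  rw [Nat.cast_sub (by omega)] at this
  exact_mod_cast this

theorem genHarmonic_half_eq_zero (hn : 2 * (n : F) + 1 = 0) (hs : Even s)
    (h0 : genHarmonic F s (2 * n) = 0) : genHarmonic F s n = 0 := by
  have hrefl := genHarmonic_eq_genHarmonic_sub_add (m := 2 * n) (by exact_mod_cast hn)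
    (by omega : n ≤ 2 * n) s
  rw [h0, hs.neg_one_pow, show 2 * n - n = n by omega] at hrefl
  refine (mul_eq_zero_iff_left (two_ne_zero_of_two_mul_add_one_eq_zero hn)).mp ?_
  linear_combination -hrefl

theorem oddHarmonic_half_eq_zero (hn : 2 * (n : F) + 1 = 0) (hs : Even s)
    (h0 : genHarmonic F s (2 * n) = 0) : oddHarmonic F s n = 0 := by
  have hhalf := genHarmonic_half_eq_zero hn hs h0
  rwa [genHarmonic_two_mul, hhalf, zero_div, add_zero] at h0

theorem genHarmonic_div_add_reflect (hn : 2 * (n : F) + 1 = 0) (hs : Even s)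
    (h0 : genHarmonic F s (2 * n) = 0) {b : ℕ} (hb : b ∈ Icc 1 (2 * n)) :
    genHarmonic F s b / b + genHarmonic F s (2 * n + 1 - b) / ((2 * n + 1 - b : ℕ) : F) =
      2 * (genHarmonic F s b / b) - 1 / (b : F) ^ (s + 1) := by
  rw [mem_Icc] at hb
  obtain ⟨a, rfl⟩ : ∃ a, b = a + 1 := ⟨b - 1, by omega⟩
  have hrefl := genHarmonic_eq_genHarmonic_sub_add (m := 2 * n) (by exact_mod_cast hn)
    (by omega : a ≤ 2 * n) s
  rw [h0, hs.neg_one_pow, one_mul] at hrefl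
  have hcast : ((2 * n + 1 - (a + 1) : ℕ) : F) = -((a + 1 : ℕ) : F) := by
    rw [Nat.cast_sub (by omega)]
    push_cast
    linear_combination hn
  rw [hcast, show 2 * n + 1 - (a + 1) = 2 * n - a by omega, eq_neg_of_add_eq_zero_left hrefl.symm,
    genHarmonic_succ, pow_succ]
  ring

theorem doubleHarmonic_eq_sum_half (hn : 2 * (n : F) + 1 = 0) (hs : Even s)
    (h0 : genHarmonic F s (2 * n) = 0) :
    doubleHarmonic F s (2 * n) =
      2 * ∑ k ∈ Icc 1 n, genHarmonic F s k / k - genHarmonic F (s + 1) n := by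
  rw [doubleHarmonic, sum_Icc_one_two_mul_eq_sum_add_reflect, genHarmonic, mul_sum,
    ← sum_sub_distrib]
  refine sum_congr rfl fun k hk => genHarmonic_div_add_reflect hn hs h0 ?_
  rw [mem_Icc] at hk ⊢
  omega

theorem doubleHarmonic_eq_sum_even (hn : 2 * (n : F) + 1 = 0) (hs : Even s)
    (h0 : genHarmonic F s (2 * n) = 0) :
    doubleHarmonic F s (2 * n) =
      2 * ∑ k ∈ Icc 1 n, genHarmonic F s (2 * k) / (2 * k) -
        genHarmonic F (s + 1) n / 2 ^ (s + 1) := by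
  rw [doubleHarmonic, sum_Icc_one_two_mul_eq_sum_even_add_reflect, genHarmonic, mul_sum,
    sum_div, ← sum_sub_distrib]
  refine sum_congr rfl fun k hk => ?_
  rw [genHarmonic_div_add_reflect hn hs h0 (by rw [mem_Icc] at hk ⊢; omega), Nat.cast_mul,
    Nat.cast_ofNat, mul_pow, div_div, mul_comm (2 ^ (s + 1) : F)]

theorem sum_oddHarmonic_div (hn : 2 * (n : F) + 1 = 0) (hs : Even s)
    (h0 : genHarmonic F s (2 * n) = 0) :
    ∑ j ∈ Icc 1 n, oddHarmonic F s j / j =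
      (1 - 1 / 2 ^ (s + 1)) * doubleHarmonic F s (2 * n) := by
  have h2 := two_ne_zero_of_two_mul_add_one_eq_zero hn
  have hsplit : 2 * ∑ k ∈ Icc 1 n, genHarmonic F s (2 * k) / (2 * k) =
      ∑ j ∈ Icc 1 n, oddHarmonic F s j / j +
        1 / 2 ^ s * ∑ j ∈ Icc 1 n, genHarmonic F s j / j := by
    rw [mul_sum, mul_sum, ← sum_add_distrib]
    refine sum_congr rfl fun j _ => ?_
    rw [genHarmonic_two_mul, ← mul_div_assoc, mul_div_mul_left _ _ h2]
    ring
  have hhalf := doubleHarmonic_eq_sum_half hn hs h0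
  have heven := doubleHarmonic_eq_sum_even hn hs h0
  rw [hsplit] at heven
  rw [pow_succ] at heven ⊢
  field_simp at heven ⊢
  linear_combination hhalf - heven

theorem sum_genHarmonic_two_div_two_mul_sub_one (hn : 2 * (n : F) + 1 = 0)
    (hne : ∀ j ∈ Icc 1 (2 * n), (j : F) ≠ 0) (h0 : genHarmonic F 2 (2 * n) = 0) :
    ∑ k ∈ Icc 1 n, genHarmonic F 2 k / (2 * k - 1) =
      2 * ∑ j ∈ Icc 1 n, oddHarmonic F 2 j / j + 4 * altHarmonic F (2 * n) := by
  have hterm : ∀ j ∈ Icc 1 n,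
      genHarmonic F 2 (n + 1 - j) / (2 * ((n + 1 - j : ℕ) : F) - 1) =
        2 * (oddHarmonic F 2 j / j) + 4 * (1 / (2 * (j : F) - 1) - 1 / (2 * (j : F))) -
          4 * (1 / (2 * (j : F) - 1) ^ 2) := by
    intro j hj
    have hodd := two_mul_sub_one_ne_zero hne hj
    rw [mem_Icc] at hj
    have h2 := two_ne_zero_of_two_mul_add_one_eq_zero hn
    have hj0 : (j : F) ≠ 0 := hne j (mem_Icc.mpr (by omega))
    have hden : 2 * ((n + 1 - j : ℕ) : F) - 1 = -(2 * j) := by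
      rw [Nat.cast_sub (by omega)]
      push_cast
      linear_combination hn
    obtain ⟨i, rfl⟩ : ∃ i, j = i + 1 := ⟨j - 1, by omega⟩
    have hrefl := genHarmonic_eq_genHarmonic_sub_add_oddHarmonic hn (by omega : i ≤ n) 2
    rw [genHarmonic_half_eq_zero hn even_two h0] at hrefl
    rw [hden, oddHarmonic_succ, show n + 1 - (i + 1) = n - i by omega]
    -- partial fractions: `1/(j(2j-1)^2) = 1/j - 2/(2j-1) + 2/(2j-1)^2`
    field_simp
    linear_combination (2 * ((i + 1 : ℕ) : F) - 1) ^ 2 * hrefl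
  rw [← sum_Icc_one_reflect, sum_congr rfl hterm, sum_sub_distrib, sum_add_distrib, ← mul_sum,
    ← mul_sum, ← mul_sum, ← altHarmonic_two_mul, ← oddHarmonic,
    oddHarmonic_half_eq_zero hn even_two h0, mul_zero, sub_zero]

end Reflection

end GeneralizedHarmonic

section Bernoulli

variable {F : Type*} [Field F]

theorem reducesTo_bernoulli {n : ℕ} (hn : ∀ j ∈ Icc 1 (n + 1), (j : F) ≠ 0) :
    ReducesTo (bernoulli n) (bernoulli n : F) := by
  induction n using Nat.strong_induction_on with
  | _ n ih =>
    have hne : ((n + 1 : ℕ) : F) ≠ 0 := hn _ (mem_Icc.mpr ⟨by omega, le_rfl⟩)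
    have hrec : bernoulli n = (((if n + 1 = 1 then 1 else 0 : ℕ) : ℚ) -
        ∑ k ∈ range n, ((n + 1).choose k : ℚ) * bernoulli k) / ((n + 1 : ℕ) : ℚ) := by
      have hsum := sum_bernoulli (n + 1)
      rw [sum_range_succ, Nat.choose_succ_self_right] at hsum
      rw [eq_div_iff (by positivity)]
      push_cast at hsum ⊢
      linear_combination hsum
    have hred : ReducesTo (bernoulli n) _ :=
      hrec ▸ ((ReducesTo.natCast _).sub (.sum fun k hk => (ReducesTo.natCast _).mul
        (ih k (mem_range.mp hk) fun j hj => hn j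
          (Icc_subset_Icc_right (by rw [mem_range] at hk; omega) hj)))).div (.natCast _) hne
    exact ⟨hred.den_ne_zero, rfl⟩

theorem sum_range_pow_eq_sum_bernoulli {m : ℕ} (hm : ∀ j ∈ Icc 1 (m + 1), (j : F) ≠ 0) (b : ℕ) :
    ∑ a ∈ range b, (a : F) ^ m =
      ∑ i ∈ range (m + 1),
        (bernoulli i : F) * ((m + 1).choose i) * (b : F) ^ (m + 1 - i) / ((m + 1 : ℕ) : F) := by
  have hleft : ReducesTo (∑ a ∈ range b, (a : ℚ) ^ m) (∑ a ∈ range b, (a : F) ^ m) :=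
    .sum fun a _ => (ReducesTo.natCast a).pow m
  rw [← hleft.cast_eq, sum_range_pow, ← Nat.cast_add_one]
  refine (ReducesTo.sum fun i hi => ?_).cast_eq
  have hB : ReducesTo (bernoulli i) (bernoulli i : F) := reducesTo_bernoulli fun j hj =>
    hm j (Icc_subset_Icc_right (by rw [mem_range] at hi; omega) hj)
  exact ((hB.mul (.natCast _)).mul ((ReducesTo.natCast b).pow _)).div (.natCast _)
    (hm _ (mem_Icc.mpr ⟨by omega, le_rfl⟩))

end Bernoulli

section ModPrime

variable {p : ℕ} [Fact p.Prime]

theorem natCast_zmod_ne_zero {k : ℕ} (hk : k ∈ Icc 1 (p - 1)) : (k : ZMod p) ≠ 0 := by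
  rw [mem_Icc] at hk
  rw [Ne, ZMod.natCast_eq_zero_iff]
  exact Nat.not_dvd_of_pos_of_lt (by omega) (by omega)

theorem sum_Icc_eq_sum_units {M : Type*} [AddCommMonoid M] (f : ZMod p → M) :
    ∑ k ∈ Icc 1 (p - 1), f k = ∑ u : (ZMod p)ˣ, f u := by
  refine sum_bij' (fun k hk => Units.mk0 (k : ZMod p) (natCast_zmod_ne_zero hk))
    (fun u _ => (u : ZMod p).val) (fun _ _ => mem_univ _) (fun u _ => ?_) (fun k hk => ?_)
    (fun u _ => Units.ext (ZMod.natCast_zmod_val _)) fun _ _ => rfl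
  · have := ZMod.val_lt (u : ZMod p)
    have := (ZMod.val_ne_zero (u : ZMod p)).mpr u.ne_zero
    rw [mem_Icc]
    omega
  · rw [mem_Icc] at hk
    exact ZMod.val_cast_of_lt (by omega)

theorem sum_Icc_natCast_pow (i : ℕ) :
    ∑ k ∈ Icc 1 (p - 1), (k : ZMod p) ^ i = if p - 1 ∣ i then -1 else 0 := by
  rw [sum_Icc_eq_sum_units (· ^ i), FiniteField.sum_pow_units, ZMod.card]

theorem genHarmonic_sub_one_eq_zero {s : ℕ} (hs : ¬p - 1 ∣ s) :
    genHarmonic (ZMod p) s (p - 1) = 0 :=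
  calc genHarmonic (ZMod p) s (p - 1)
    _ = ∑ u : (ZMod p)ˣ, ((u⁻¹ : (ZMod p)ˣ) : ZMod p) ^ s := by
        rw [genHarmonic, sum_Icc_eq_sum_units fun x : ZMod p => 1 / x ^ s]
        simp only [Units.val_inv_eq_inv_val, inv_pow, one_div]
    _ = ∑ u : (ZMod p)ˣ, (u : ZMod p) ^ s :=
        Equiv.sum_comp (Equiv.inv (ZMod p)ˣ) fun u => (u : ZMod p) ^ s
    _ = 0 := by rw [FiniteField.sum_pow_units, ZMod.card, if_neg hs]

theorem one_div_pow_eq_pow_sub {x : ZMod p} (hx : x ≠ 0) {s : ℕ} (hs : s ≤ p - 1) :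
    1 / x ^ s = x ^ (p - 1 - s) := by
  rw [div_eq_iff (pow_ne_zero s hx), ← pow_add, Nat.sub_add_cancel hs,
    ZMod.pow_card_sub_one_eq_one hx]

theorem genHarmonic_eq_sum_range_pow {s b : ℕ} (hs : s < p - 1) (hb : b ≤ p - 1) :
    genHarmonic (ZMod p) s b = ∑ a ∈ range (b + 1), (a : ZMod p) ^ (p - 1 - s) := by
  induction b with
  | zero => simp [genHarmonic, zero_pow (by omega : p - 1 - s ≠ 0)]
  | succ b ih =>
    rw [genHarmonic_succ, sum_range_succ, ih (by omega), one_div_pow_eq_pow_sub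
      (natCast_zmod_ne_zero (mem_Icc.mpr (by omega))) hs.le]

theorem doubleHarmonic_sub_one_eq_neg_bernoulli {s : ℕ} (hs : 0 < s) (hsp : s + 1 < p - 1) :
    doubleHarmonic (ZMod p) s (p - 1) = -(bernoulli (p - 1 - s) : ZMod p) := by
  obtain ⟨m, hm⟩ : ∃ m, p - 1 - s = m + 1 := ⟨p - 1 - s - 1, by omega⟩
  have hfaulhaber := sum_range_pow_eq_sum_bernoulli (F := ZMod p) (m := m + 1)
    fun j hj => natCast_zmod_ne_zero (Icc_subset_Icc_right (by omega) hj)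
  have hterm : ∀ b ∈ Icc 1 (p - 1), genHarmonic (ZMod p) s b / b =
      ∑ i ∈ range (m + 2), (bernoulli i : ZMod p) * ((m + 2).choose i) / ((m + 2 : ℕ) : ZMod p) *
        (b : ZMod p) ^ (m + 1 - i) + (b : ZMod p) ^ m := by
    intro b hb
    have hb0 := natCast_zmod_ne_zero hb
    rw [genHarmonic_eq_sum_range_pow (by omega) (mem_Icc.mp hb).2, sum_range_succ, hm, hfaulhaber,
      add_div, pow_succ _ m, mul_div_cancel_right₀ _ hb0, sum_div]
    congr 1
    refine sum_congr rfl fun i hi => ?_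
    rw [show m + 1 + 1 - i = m + 1 - i + 1 by rw [mem_range] at hi; omega, pow_succ]
    field_simp
  have hnot : ∀ i, 0 < i → i < p - 1 → ¬p - 1 ∣ i := fun i => Nat.not_dvd_of_pos_of_lt
  have hm0 : ((m + 2 : ℕ) : ZMod p) ≠ 0 := natCast_zmod_ne_zero (mem_Icc.mpr (by omega))
  rw [doubleHarmonic, sum_congr rfl hterm, sum_add_distrib, sum_comm]
  simp_rw [← mul_sum, sum_Icc_natCast_pow]
  rw [if_neg (hnot m (by omega) (by omega)), add_zero,
    sum_eq_single_of_mem (m + 1) (self_mem_range_succ _) fun i hi hne => ?_, Nat.sub_self,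
    if_pos (dvd_zero _), Nat.choose_succ_self_right, mul_div_cancel_right₀ _ hm0, hm, mul_neg_one]
  rw [mem_range] at hi
  rw [if_neg (hnot _ (by omega) (by omega)), mul_zero]

theorem natCast_choose_sub_one {k : ℕ} (hk : k < p) :
    ((p - 1).choose k : ZMod p) = (-1) ^ k := by
  induction k with
  | zero => simp
  | succ k ih =>
    have hdvd : (p.choose (k + 1) : ZMod p) = 0 := by
      rw [ZMod.natCast_eq_zero_iff]
      exact (Fact.out : p.Prime).dvd_choose_self (by omega) hk
    rw [show p.choose (k + 1) = (p - 1 + 1).choose (k + 1) by congr 1; omega,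
      Nat.choose_succ_succ, Nat.cast_add, ih (by omega)] at hdvd
    rw [pow_succ]
    linear_combination hdvd

theorem fermatQ_eq_sum_choose_div {p : ℕ} (hp : 0 < p) :
    fermatQ p = (∑ k ∈ Icc 1 (p - 1), ((p - 1).choose (k - 1) : ℚ) / k) / 2 := by
  obtain ⟨m, rfl⟩ : ∃ m, p = m + 1 := ⟨p - 1, by omega⟩
  have habsorb : ∀ k ∈ Icc 1 m, (m.choose (k - 1) : ℚ) / k = (m + 1).choose k / (m + 1 : ℕ) := by
    intro k hk
    obtain ⟨j, rfl⟩ : ∃ j, k = j + 1 := ⟨k - 1, by rw [mem_Icc] at hk; omega⟩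
    rw [div_eq_div_iff (by positivity) (by positivity), mul_comm]
    exact_mod_cast Nat.add_one_mul_choose_eq m j
  have hsum : ∑ k ∈ Icc 1 m, ((m + 1).choose k : ℚ) = 2 ^ (m + 1) - 2 := by
    have hrow := Nat.sum_range_choose (m + 1)
    rw [sum_range_succ, sum_range_succ', Nat.choose_self, Nat.choose_zero_right] at hrow
    rw [← Ico_add_one_right_eq_Icc, sum_Ico_eq_sum_range]
    simp only [Nat.add_sub_cancel, add_comm 1]
    rw [eq_sub_iff_add_eq]
    exact_mod_cast hrow
  rw [fermatQ, Nat.add_sub_cancel, sum_congr rfl habsorb, ← sum_div, hsum]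
  ring

theorem reducesTo_fermatQ (hp : p ≠ 2) :
    ReducesTo (fermatQ p) (altHarmonic (ZMod p) (p - 1) / 2) := by
  have h2 : ((2 : ℕ) : ZMod p) ≠ 0 := natCast_zmod_ne_zero
    (mem_Icc.mpr (by have := (Fact.out : p.Prime).two_le; omega))
  rw [fermatQ_eq_sum_choose_div (Fact.out : p.Prime).pos]
  refine ReducesTo.div (.sum fun k hk => ?_) (.natCast 2) h2
  rw [← natCast_choose_sub_one (by rw [mem_Icc] at hk; omega)]
  exact (ReducesTo.natCast _).div (.natCast k) (natCast_zmod_ne_zero hk)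

theorem reducesTo_bernoulli_sub_one_sub {s : ℕ} (hs : 0 < s) (hsp : s + 1 < p - 1) :
    ReducesTo (bernoulli (p - 1 - s)) (-doubleHarmonic (ZMod p) s (p - 1)) where
  den_ne_zero := (reducesTo_bernoulli fun _ hj => natCast_zmod_ne_zero
    (Icc_subset_Icc_right (by omega) hj)).den_ne_zero
  cast_eq := by rw [doubleHarmonic_sub_one_eq_neg_bernoulli hs hsp, neg_neg]

theorem reducesTo_harmonic2_summand {n k : ℕ} (hn : p = 2 * n + 1) (hk : k ∈ Icc 1 n) :
    ReducesTo (((p : ℚ) / 2 - k) * harmonic2 k / (((p : ℚ) + 1 - 2 * k) * ((p : ℚ) + 2 * k)))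
      (1 / 2 * (genHarmonic (ZMod p) 2 k / (2 * k - 1))) := by
  have hne : ∀ j ∈ Icc 1 (2 * n), (j : ZMod p) ≠ 0 := fun j hj =>
    natCast_zmod_ne_zero (by rwa [hn, Nat.add_sub_cancel])
  have hkn := mem_Icc.mp hk
  have h2 : (2 : ZMod p) ≠ 0 := hne 2 (mem_Icc.mpr (by omega))
  have hk0 : (k : ZMod p) ≠ 0 := hne k (mem_Icc.mpr (by omega))
  have hodd : 2 * (k : ZMod p) - 1 ≠ 0 := two_mul_sub_one_ne_zero hne hk
  have hden : (0 + 1 - 2 * (k : ZMod p)) * (0 + 2 * k) ≠ 0 := by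
    rw [zero_add, zero_add, ← neg_sub (2 * (k : ZMod p))]
    exact mul_ne_zero (neg_ne_zero.mpr hodd) (mul_ne_zero h2 hk0)
  have hp : ReducesTo (p : ℚ) (0 : ZMod p) := by
    simpa only [CharP.cast_eq_zero] using ReducesTo.natCast (F := ZMod p) p
  have h2k : ReducesTo (2 * (k : ℚ)) (2 * (k : ZMod p)) := (ReducesTo.ofNat 2).mul (.natCast k)
  have hH : ReducesTo (harmonic2 k) (genHarmonic (ZMod p) 2 k) :=
    reducesTo_genHarmonic (fun j hj => hne j (Icc_subset_Icc_right (by omega) hj)) 2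
  convert (((hp.div (.ofNat 2) h2).sub (.natCast k)).mul hH).div
    (((hp.add .one).sub h2k).mul (hp.add h2k)) hden using 1
  rw [zero_div, zero_sub, zero_add, zero_add, ← neg_sub (2 * (k : ZMod p)), neg_mul, neg_mul,
    neg_div_neg_eq]
  field_simp

theorem reducesTo_sum_harmonic2_summand (hp3 : 3 < p) :
    ReducesTo (∑ k ∈ Icc 1 ((p - 1) / 2),
        ((p : ℚ) / 2 - k) * harmonic2 k / (((p : ℚ) + 1 - 2 * k) * ((p : ℚ) + 2 * k)))
      (2 * altHarmonic (ZMod p) (p - 1) + 7 / 8 * doubleHarmonic (ZMod p) 2 (p - 1)) := by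
  obtain ⟨n, hn⟩ := (Fact.out : p.Prime).odd_of_ne_two (by omega)
  have hpred : p - 1 = 2 * n := by omega
  have hzero : 2 * (n : ZMod p) + 1 = 0 := by
    exact_mod_cast (congrArg Nat.cast hn).symm.trans (CharP.cast_eq_zero (ZMod p) p)
  have h2 : (2 : ZMod p) ≠ 0 := two_ne_zero_of_two_mul_add_one_eq_zero hzero
  have hne : ∀ j ∈ Icc 1 (2 * n), (j : ZMod p) ≠ 0 := fun _ => hpred ▸ natCast_zmod_ne_zero
  have hH : genHarmonic (ZMod p) 2 (2 * n) = 0 :=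
    hpred ▸ genHarmonic_sub_one_eq_zero (Nat.not_dvd_of_pos_of_lt two_pos (by omega))
  have hsum := ReducesTo.sum fun k => reducesTo_harmonic2_summand (k := k) hn
  rw [← mul_sum, sum_genHarmonic_two_div_two_mul_sub_one hzero hne hH,
    sum_oddHarmonic_div hzero even_two hH] at hsum
  rw [hpred, Nat.mul_div_cancel_left n two_pos]
  convert hsum using 1
  rw [show (8 : ZMod p) = 2 ^ 3 by norm_num]
  field_simp
  ring

end ModPrime

theorem sum_H2_k_congr (p : ℕ) (hp : p.Prime) (hp3 : 3 < p) :
    ratCongr p 1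
      (∑ k ∈ Finset.Icc 1 ((p - 1) / 2),
        ((p : ℚ) / 2 - k) * harmonic2 k / (((p : ℚ) + 1 - 2 * k) * ((p : ℚ) + 2 * k)))
      (4 * fermatQ p - (7 / 8) * bernoulli (p - 3)) := by
  have : Fact p.Prime := ⟨hp⟩
  have hp5 : 5 ≤ p := hp.five_le_of_ne_two_of_ne_three (by omega) (by omega)
  have h2 : (2 : ZMod p) ≠ 0 := by
    exact_mod_cast natCast_zmod_ne_zero (p := p) (k := 2) (mem_Icc.mpr (by omega))
  have h8 : (8 : ZMod p) ≠ 0 := by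
    rw [show (8 : ZMod p) = 2 ^ 3 by norm_num]
    exact pow_ne_zero 3 h2
  have hq : ReducesTo (fermatQ p) (altHarmonic (ZMod p) (p - 1) / 2) :=
    reducesTo_fermatQ (by omega)
  have hB : ReducesTo (bernoulli (p - 3)) (-doubleHarmonic (ZMod p) 2 (p - 1)) :=
    reducesTo_bernoulli_sub_one_sub two_pos (by omega)
  refine (reducesTo_sum_harmonic2_summand hp3).ratCongr_one ?_
  convert ((ReducesTo.ofNat 4).mul hq).sub (((ReducesTo.ofNat 7).div (.ofNat 8) h8).mul hB) using 1
  field_simp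
  ring
end

section
/- Define, for integers n ≥ 0 and k ≥ 0, the rational numbers F(n,k) = (6n-2k+1)/2^{8n-2k} · C(2n,n)·C(2n+2k,n+k)·C(2n-2k,n-k)·C(n+k,n) / C(2k,k) if n ≥ k and F(n,k) = 0 if n < k, and G(n,k) = n^2·C(2n,n)·C(2n+2k,n+k)·C(2n-2k,n-k)·C(n+k,n) / (2^{8n-2k-4}·(2n+2k-1)·C(2k,k)) if n ≥ k and (n,k) ≠ (0,0), with G(n,k) = 0 if n < k. Then for all integers n ≥ 0 and k ≥ 1, F(n,k-1) - F(n,k) = G(n+1,k) - G(n,k). -/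
/-- The WZ-pair function `F(n,k)`; it vanishes for `n < k`. -/
def F (n k : ℕ) : ℚ :=
  if k ≤ n then
    (6 * (n : ℚ) - 2 * k + 1) / 2 ^ (8 * n - 2 * k) *
      (((2 * n).choose n : ℚ) * ((2 * n + 2 * k).choose (n + k)) *
        ((2 * n - 2 * k).choose (n - k)) * ((n + k).choose n)) /
      ((2 * k).choose k)
  else 0

/-- The WZ-pair function `G(n,k)`; it vanishes for `n < k` (and we also set
`G(0,0) = 0`, a value never used). -/
def G (n k : ℕ) : ℚ :=
  if k ≤ n ∧ (n, k) ≠ (0, 0) then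
    (n : ℚ) ^ 2 *
      (((2 * n).choose n : ℚ) * ((2 * n + 2 * k).choose (n + k)) *
        ((2 * n - 2 * k).choose (n - k)) * ((n + k).choose n)) /
      (2 ^ (8 * n - 2 * k - 4) * (2 * (n : ℚ) + 2 * k - 1) * ((2 * k).choose k))
  else 0

/-!
Both members of the pair are multiples of one hypergeometric term `H`, here `wzTerm`:
`F = (6n - 2k + 1) H` and `G = 16n² / (2n + 2k - 1) H`. Both `H(n, k + 1)` and `H(n + 1, k + 1)`
are `H(n, k)` times a rational function of `n` and `k`, so the claim follows from an identity
between rational functions. No boundary cases remain: the first factor vanishes at `n = k`, and the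
diagonal step, unlike `n ↦ n + 1` alone, never enters the support `k ≤ n` from outside.
-/

section Recurrences

variable {K : Type*} [Field K] [CharZero K]

theorem cast_centralBinom_succ (n : ℕ) :
    ((n + 1).centralBinom : K) = 2 * (2 * n + 1) / (n + 1) * n.centralBinom := by
  have h : ((n : K) + 1) * (n + 1).centralBinom = 2 * (2 * n + 1) * n.centralBinom := by
    exact_mod_cast n.succ_mul_centralBinom_succ
  field_simp
  linear_combination h

theorem cast_succ_add_choose_succ (n k : ℕ) :
    ((n + 1 + k).choose (n + 1) : K) = (n + k + 1) / (n + 1) * (n + k).choose n := by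
  have h : ((n : K) + k + 1) * (n + k).choose n = (n + 1 + k).choose (n + 1) * (n + 1) := by
    rw [Nat.add_right_comm n 1 k]
    exact_mod_cast Nat.add_one_mul_choose_eq (n + k) n
  field_simp
  linear_combination -h

theorem cast_add_succ_choose (n k : ℕ) :
    ((n + (k + 1)).choose n : K) = (n + k + 1) / (k + 1) * (n + k).choose n := by
  rw [Nat.choose_symm_add, Nat.choose_symm_add, add_comm n, add_comm n,
    cast_succ_add_choose_succ, add_comm (k : K)]

end Recurrences

/-- The hypergeometric term common to `F` and `G`, extended by zero to `n < k`. -/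
def wzTerm (n k : ℕ) : ℚ :=
  if k ≤ n then
    n.centralBinom * (n + k).centralBinom * (n - k).centralBinom * (n + k).choose n /
      (2 ^ (8 * n - 2 * k) * k.centralBinom)
  else 0

theorem F_eq_mul_wzTerm (n k : ℕ) : F n k = (6 * n - 2 * k + 1) * wzTerm n k := by
  unfold F wzTerm
  split_ifs
  · simp only [← Nat.mul_add, ← Nat.mul_sub, ← Nat.centralBinom_eq_two_mul_choose]
    ring
  · rw [mul_zero]

theorem G_eq_mul_wzTerm (n k : ℕ) :
    G n k = 16 * n ^ 2 / (2 * n + 2 * k - 1) * wzTerm n k := by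
  rcases Nat.eq_zero_or_pos n with rfl | hn
  · simp [G]
  by_cases hkn : k ≤ n
  · have hpow : (2 : ℚ) ^ (8 * n - 2 * k) = 2 ^ (8 * n - 2 * k - 4) * 16 := by
      rw [← pow_sub_mul_pow 2 (show 4 ≤ 8 * n - 2 * k by omega)]
      norm_num
    have hnk : (n, k) ≠ (0, 0) := fun h ↦ hn.ne' (congrArg Prod.fst h)
    rw [G, if_pos ⟨hkn, hnk⟩, wzTerm, if_pos hkn, hpow]
    simp only [← Nat.mul_add, ← Nat.mul_sub, ← Nat.centralBinom_eq_two_mul_choose]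
    generalize 2 * (n : ℚ) + 2 * k - 1 = d
    ring
  · simp [G, wzTerm, hkn]

theorem wzTerm_of_lt {n k : ℕ} (h : n < k) : wzTerm n k = 0 :=
  if_neg h.not_ge

theorem wzTerm_add_left (m k : ℕ) :
    wzTerm (m + k) k =
      (m + k).centralBinom * (m + k + k).centralBinom * m.centralBinom *
          (m + k + k).choose (m + k) /
        (2 ^ (8 * m + 6 * k) * k.centralBinom) := by
  rw [wzTerm, if_pos (Nat.le_add_left k m), Nat.add_sub_cancel,
    show 8 * (m + k) - 2 * k = 8 * m + 6 * k by omega]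

theorem wzTerm_succ_right (n k : ℕ) :
    wzTerm n (k + 1) =
      2 * (2 * n + 2 * k + 1) * (n - k) / ((2 * (n - k) - 1) * (2 * k + 1)) * wzTerm n k := by
  rcases lt_trichotomy n k with hlt | rfl | hgt
  · simp [wzTerm_of_lt hlt, wzTerm_of_lt (Nat.lt_succ_of_lt hlt)]
  · simp [wzTerm_of_lt (Nat.lt_succ_self n)]
  · obtain ⟨m, rfl⟩ : ∃ m, n = m + (k + 1) := Nat.exists_eq_add_of_le' hgt
    have hterm := wzTerm_add_left (m + 1) k
    rw [show m + 1 + k = m + (k + 1) by ring] at hterm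
    rw [hterm, wzTerm_add_left, cast_add_succ_choose (m + (k + 1)) k,
      ← add_assoc (m + (k + 1)) k 1, cast_centralBinom_succ (m + (k + 1) + k),
      cast_centralBinom_succ m, cast_centralBinom_succ k]
    push_cast
    rw [show 2 * ((m : ℚ) + (k + 1) - k) - 1 = 2 * m + 1 by ring]
    field_simp
    ring

theorem wzTerm_succ_succ (n k : ℕ) :
    wzTerm (n + 1) (k + 1) =
      (2 * n + 1) * (2 * n + 2 * k + 1) * (2 * n + 2 * k + 3) /
        (16 * (n + 1) ^ 2 * (2 * k + 1)) * wzTerm n k := by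
  rcases lt_or_ge n k with hlt | hge
  · simp [wzTerm_of_lt hlt, wzTerm_of_lt (Nat.succ_lt_succ hlt)]
  · obtain ⟨m, rfl⟩ := Nat.exists_eq_add_of_le' hge
    rw [add_assoc m k 1, wzTerm_add_left, wzTerm_add_left, ← add_assoc m k 1,
      cast_succ_add_choose_succ (m + k) (k + 1), cast_add_succ_choose (m + k) k,
      show m + k + 1 + (k + 1) = m + k + k + 1 + 1 by ring,
      cast_centralBinom_succ (m + k + k + 1), cast_centralBinom_succ (m + k + k),
      cast_centralBinom_succ (m + k), cast_centralBinom_succ k]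
    push_cast
    field_simp
    ring

theorem wz_pair_identity (n k : ℕ) (hk : 1 ≤ k) :
    F n (k - 1) - F n k = G (n + 1) k - G n k := by
  obtain ⟨j, rfl⟩ := Nat.exists_eq_add_of_le' hk
  have hnj : 2 * ((n : ℚ) - j) - 1 ≠ 0 := by
    have hodd : 2 * ((n : ℤ) - j) - 1 ≠ 0 := by omega
    exact_mod_cast hodd
  rw [Nat.add_sub_cancel, F_eq_mul_wzTerm, F_eq_mul_wzTerm, G_eq_mul_wzTerm, G_eq_mul_wzTerm,
    wzTerm_succ_succ, wzTerm_succ_right]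
  push_cast
  rw [show 2 * ((n : ℚ) + 1) + 2 * (j + 1) - 1 = 2 * n + 2 * j + 3 by ring,
    show 2 * (n : ℚ) + 2 * (j + 1) - 1 = 2 * n + 2 * j + 1 by ring]
  field_simp
  ring
end

section
/- Let p > 3 be a prime. Then ∑_{k=1}^{(p-1)/2} 1/(k(2k-1)) ≡ 4·q_p(2) - 2p·q_p(2)^2 modulo p^2 (as rational numbers). -/
/-!
Write `p = 2m + 1`, `H n = ∑_{k ≤ n} 1/k` and `q = q_p(2)`. Splitting `1/(k(2k-1))` into partial
fractions turns the sum into `2(H (p-1) - H m)`, and `H (p-1) ≡ 0` modulo `p²` by Wolstenholme, so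
what is needed is Lehmer's congruence `H m ≡ p q² - 2q` modulo `p²`. It comes from the identity
`2 ^ (p-1) * ∏_{k ≤ m} (1 - p/(2k)) = ∏_{k ≤ m} (1 - p/k)`: expand both products modulo `p³`, where
by Newton's identity and `∑_{k ≤ m} 1/k² ≡ 0` modulo `p` only the power sum `H m` matters, write
`2 ^ (p-1) = 1 + pq`, and solve for `H m`, first modulo `p` and then modulo `p²`.
-/

open Finset

section ProductExpansion

variable {R ι : Type*} [CommRing R]

theorem cube_dvd_two_mul_prod_one_sub_mul (t : R) (s : Finset ι) (x : ι → R) :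
    t ^ 3 ∣ 2 * ∏ i ∈ s, (1 - t * x i) -
      (2 - 2 * t * ∑ i ∈ s, x i + t ^ 2 * ((∑ i ∈ s, x i) ^ 2 - ∑ i ∈ s, x i ^ 2)) := by
  classical
  induction s using Finset.induction_on with
  | empty => simp
  | insert i s hi ih =>
    obtain ⟨c, hc⟩ := ih
    rw [prod_insert hi, sum_insert hi, sum_insert hi]
    refine ⟨c * (1 - t * x i) - x i * ((∑ j ∈ s, x j) ^ 2 - ∑ j ∈ s, x j ^ 2), ?_⟩
    linear_combination (1 - t * x i) * hc

theorem sq_dvd_of_one_add_mul_prod_eq {t q : R} (ht : IsLeftRegular t) (ht2 : IsCoprime t 2)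
    {s : Finset ι} {x : ι → R} (hsq : t ∣ ∑ i ∈ s, x i ^ 2)
    (hprod : (1 + t * q) * ∏ i ∈ s, (1 - t * x i) = ∏ i ∈ s, (1 - t * (2 * x i))) :
    t ^ 2 ∣ 2 * ∑ i ∈ s, x i - (t * q ^ 2 - 2 * q) := by
  obtain ⟨a, ha⟩ := cube_dvd_two_mul_prod_one_sub_mul t s x
  obtain ⟨b, hb⟩ := cube_dvd_two_mul_prod_one_sub_mul t s fun i ↦ 2 * x i
  simp only [mul_pow, ← mul_sum] at hb
  obtain ⟨u, hu⟩ := hsq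
  set X := ∑ i ∈ s, x i
  set Z := ∑ i ∈ s, x i ^ 2
  have hdiv : 2 * (X + q) =
      t * (2 * q * X + 3 * (X ^ 2 - Z) + t * (b - a - q * (X ^ 2 - Z) - t * q * a)) :=
    ht (by linear_combination 2 * hprod - (1 + t * q) * ha + hb)
  obtain ⟨v, hv⟩ : t ∣ X + q := ht2.dvd_of_dvd_mul_left ⟨_, hdiv⟩
  refine ⟨(3 * X - q) * v - 3 * u + b - a - q * (X ^ 2 - Z) - t * q * a, ?_⟩
  linear_combination hdiv + t * (3 * X - q) * hv - 3 * t * hu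

end ProductExpansion

theorem prod_two_mul_odd_eq_prod_add (m : ℕ) :
    ∏ i ∈ range m, 2 * (2 * i + 1) = ∏ i ∈ range m, (m + 1 + i) := by
  induction m with
  | zero => rfl
  | succ m ih =>
    apply Nat.eq_of_mul_eq_mul_left (Nat.add_one_pos m)
    have hshift : (m + 1) * ∏ i ∈ range (m + 1), (m + 1 + 1 + i) =
        (∏ i ∈ range m, (m + 1 + i)) * (2 * m + 1) * (2 * m + 2) := by
      calc
        _ = ∏ i ∈ range (m + 2), (m + 1 + i) := by
          rw [prod_range_succ' _ (m + 1), mul_comm]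
          simp only [add_assoc, add_comm 1, add_zero]
        _ = _ := by rw [prod_range_succ, prod_range_succ]; ring
    rw [hshift, prod_range_succ, ih]
    ring

-- The right-hand factors stay unreduced: both sides are products over `x i = 1 / (2 * (i + 1))`.
theorem four_pow_mul_prod_one_sub_div_two_mul {K : Type*} [Field K] [CharZero K] (m : ℕ) :
    (4 : K) ^ m * ∏ i ∈ range m, (1 - (2 * m + 1) * (2 * (i + 1 : K))⁻¹) =
      ∏ i ∈ range m, (1 - (2 * m + 1) * (2 * (2 * (i + 1 : K))⁻¹)) := by
  have hreflect : ∏ i ∈ range m, 2 * (2 * m + 1 - 2 * (i + 1) : K) =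
      ∏ i ∈ range m, (2 * m + 1 - (i + 1) : K) := by
    have h := congrArg (Nat.cast (R := K)) (prod_two_mul_odd_eq_prod_add m)
    rw [← prod_range_reflect, ← prod_range_reflect (fun i ↦ m + 1 + i)] at h
    push_cast at h
    convert h using 2 with i hi i hi <;>
    · rw [Nat.sub_sub, Nat.cast_sub (by grind)]
      push_cast
      ring
  have hk (i : ℕ) : (i + 1 : K) ≠ 0 := i.cast_add_one_ne_zero
  calc
    _ = ∏ i ∈ range m, (-(i + 1 : K)⁻¹) * (2 * (2 * m + 1 - 2 * (i + 1))) := by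
      rw [← card_range m, ← prod_const, card_range, ← prod_mul_distrib]
      exact prod_congr rfl fun i _ ↦ by field_simp [hk i]; ring
    _ = ∏ i ∈ range m, (-(i + 1 : K)⁻¹) * (2 * m + 1 - (i + 1)) := by
      rw [prod_mul_distrib, hreflect, prod_mul_distrib]
    _ = _ := prod_congr rfl fun i _ ↦ by field_simp [hk i]; ring

theorem natCast_mul_fermatQ {p : ℕ} (hp : p ≠ 0) : (p : ℚ) * fermatQ p = 2 ^ (p - 1) - 1 :=
  mul_div_cancel₀ _ (mod_cast hp)

/-- The localization `ℤ_(p)` of the integers at the prime `p`: the rational numbers with denominator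
prime to `p`, encoded as the valuation ring of the `p`-adic valuation of `ℚ`. -/
abbrev pIntegers (p : ℕ) [Fact p.Prime] : Subring ℚ := (Rat.padicValuation p).integer

section Congruences

variable {p r : ℕ} [Fact p.Prime] {a b c : ℚ}

theorem ratCongr_iff_exists_pIntegers :
    ratCongr p r a b ↔ ∃ c : pIntegers p, a - b = c * p ^ r := by
  simp [ratCongr, Valuation.mem_integer_iff, Rat.padicValuation_le_one_iff, and_comm]

theorem ratCongr_coe_iff_dvd {a b : pIntegers p} :
    ratCongr p r a b ↔ (p : pIntegers p) ^ r ∣ a - b := by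
  rw [ratCongr_iff_exists_pIntegers]
  refine exists_congr fun c ↦ ?_
  rw [mul_comm, ← Subtype.coe_inj]
  push_cast
  rfl

theorem ratCongr_natCast_of_modEq {m n : ℕ} (h : m ≡ n [MOD p ^ r]) : ratCongr p r m n := by
  obtain ⟨c, hc⟩ := h.symm.dvd
  refine ratCongr_iff_exists_pIntegers.2 ⟨c, ?_⟩
  rw [mul_comm]
  exact_mod_cast congrArg (Int.cast (R := ℚ)) hc

theorem inv_natCast_mem_pIntegers {n : ℕ} (hn : ¬ p ∣ n) : (n : ℚ)⁻¹ ∈ pIntegers p := by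
  have : n ≠ 0 := by rintro rfl; simp at hn
  rw [Valuation.mem_integer_iff, Rat.padicValuation_le_one_iff]
  simpa [Rat.inv_natCast_den, this] using hn

namespace ratCongr

theorem trans (hab : ratCongr p r a b) (hbc : ratCongr p r b c) : ratCongr p r a c := by
  rw [ratCongr_iff_exists_pIntegers] at *
  obtain ⟨u, hu⟩ := hab
  obtain ⟨v, hv⟩ := hbc
  exact ⟨u + v, by push_cast; linear_combination hu + hv⟩

theorem symm (h : ratCongr p r a b) : ratCongr p r b a := by
  rw [ratCongr_iff_exists_pIntegers] at *
  obtain ⟨u, hu⟩ := h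
  exact ⟨-u, by push_cast; linear_combination -hu⟩

theorem add_right (h : ratCongr p r a b) (c : ℚ) : ratCongr p r (a + c) (b + c) := by
  rw [ratCongr_iff_exists_pIntegers] at *
  rwa [add_sub_add_right_eq_sub]

theorem sub {a' b' : ℚ} (h : ratCongr p r a b) (h' : ratCongr p r a' b') :
    ratCongr p r (a - a') (b - b') := by
  rw [ratCongr_iff_exists_pIntegers] at *
  obtain ⟨u, hu⟩ := h
  obtain ⟨v, hv⟩ := h'
  exact ⟨u - v, by push_cast; linear_combination hu - hv⟩

theorem sum {ι : Type*} {s : Finset ι} {f g : ι → ℚ} (h : ∀ i ∈ s, ratCongr p r (f i) (g i)) :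
    ratCongr p r (∑ i ∈ s, f i) (∑ i ∈ s, g i) := by
  simp only [ratCongr_iff_exists_pIntegers] at h ⊢
  choose! c hc using h
  refine ⟨∑ i ∈ s, c i, ?_⟩
  rw [← sum_sub_distrib, sum_congr rfl hc]
  push_cast
  rw [sum_mul]

theorem mul_left (hc : c ∈ pIntegers p) (h : ratCongr p r a b) : ratCongr p r (c * a) (c * b) := by
  rw [ratCongr_iff_exists_pIntegers] at *
  obtain ⟨u, hu⟩ := h
  exact ⟨⟨c, hc⟩ * u, by push_cast; linear_combination c * hu⟩

theorem natCast_mul (h : ratCongr p r a b) : ratCongr p (r + 1) (p * a) (p * b) := by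
  rw [ratCongr_iff_exists_pIntegers] at *
  obtain ⟨u, hu⟩ := h
  exact ⟨u, by linear_combination p * hu⟩

theorem of_mul_left {n : ℕ} (hn : ¬ p ∣ n) (h : ratCongr p r (n * a) (n * b)) :
    ratCongr p r a b := by
  have hn0 : (n : ℚ) ≠ 0 := by rintro h0; simp_all
  simpa [hn0] using h.mul_left (inv_natCast_mem_pIntegers hn)

theorem pow (ha : a ∈ pIntegers p) (hb : b ∈ pIntegers p) (h : ratCongr p r a b) (n : ℕ) :
    ratCongr p r (a ^ n) (b ^ n) := by
  lift a to pIntegers p using ha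
  lift b to pIntegers p using hb
  exact_mod_cast ratCongr_coe_iff_dvd.2
    ((ratCongr_coe_iff_dvd.1 h).trans (sub_dvd_pow_sub_pow a b n))

end ratCongr

theorem ratCongr_natCast_pow_sub_one {n : ℕ} (hn : ¬ p ∣ n) :
    ratCongr p 1 ((n : ℚ) ^ (p - 1)) 1 := by
  have h := Nat.ModEq.pow_card_sub_one_eq_one (Fact.out : p.Prime)
    ((Nat.Prime.coprime_iff_not_dvd Fact.out).2 hn).symm
  exact_mod_cast ratCongr_natCast_of_modEq (by rwa [pow_one])

theorem fermatQ_mem_pIntegers (hp : p ≠ 2) : fermatQ p ∈ pIntegers p := by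
  have h2 : ¬ p ∣ 2 := by rwa [Nat.prime_dvd_prime_iff_eq Fact.out Nat.prime_two]
  have hp0 : p ≠ 0 := (Fact.out : p.Prime).ne_zero
  obtain ⟨c, hc⟩ := ratCongr_iff_exists_pIntegers.1 (ratCongr_natCast_pow_sub_one h2)
  have : fermatQ p = c := mul_left_cancel₀ (Nat.cast_ne_zero.2 hp0) <| by
    rw [natCast_mul_fermatQ hp0, mul_comm (p : ℚ)]
    simpa using hc
  exact this ▸ c.2

end Congruences

section InversePowerSums

variable {p : ℕ}

theorem not_dvd_add_one_of_mem_range {i : ℕ} (hi : i ∈ range (p - 1)) : ¬ p ∣ i + 1 :=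
  Nat.not_dvd_of_pos_of_lt i.succ_pos (by grind)

theorem inv_add_inv_eq_of_add_eq {k n : ℕ} (hk : k ≠ 0) (hn : n ≠ 0) (h : k + n = p) :
    (k : ℚ)⁻¹ + (n : ℚ)⁻¹ = p * ((n : ℚ)⁻¹ * (k : ℚ)⁻¹) := by
  rw [← h]
  push_cast
  field_simp
  ring

variable [Fact p.Prime]

theorem dvd_sum_range_pow {e : ℕ} (he : e < p - 1) : p ∣ ∑ i ∈ range p, i ^ e := by
  rw [← ZMod.natCast_eq_zero_iff]
  push_cast
  calc
    ∑ i ∈ range p, (i : ZMod p) ^ e = ∑ x : ZMod p, x ^ e :=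
      sum_bij' (fun i _ ↦ (i : ZMod p)) (fun x _ ↦ x.val) (by simp) (by simp [ZMod.val_lt])
        (fun i hi ↦ ZMod.val_cast_of_lt (mem_range.1 hi)) (by simp) (by simp)
    _ = 0 := FiniteField.sum_pow_lt_card_sub_one _ e (by rwa [ZMod.card])

theorem ratCongr_inv_pow {n s : ℕ} (hn : ¬ p ∣ n) (hs : s ≤ p - 1) :
    ratCongr p 1 ((n : ℚ)⁻¹ ^ s) ((n : ℚ) ^ (p - 1 - s)) := by
  have hn0 : (n : ℚ) ≠ 0 := by rintro h0; simp_all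
  have h := (ratCongr_natCast_pow_sub_one hn).mul_left (pow_mem (inv_natCast_mem_pIntegers hn) s)
  rw [mul_one, inv_pow, mul_comm, ← pow_sub₀ _ hn0 hs] at h
  rw [inv_pow]
  exact h.symm

theorem ratCongr_sum_inv_pow {s : ℕ} (hs : 0 < s) (hsp : s < p - 1) :
    ratCongr p 1 (∑ i ∈ range (p - 1), ((i + 1 : ℕ) : ℚ)⁻¹ ^ s) 0 := by
  have hshift : ∑ i ∈ range (p - 1), (i + 1) ^ (p - 1 - s) = ∑ i ∈ range p, i ^ (p - 1 - s) := by
    have h := sum_range_succ' (fun i ↦ i ^ (p - 1 - s)) (p - 1)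
    rw [Nat.sub_add_cancel (Fact.out : p.Prime).one_le, zero_pow (by lia), add_zero] at h
    exact h.symm
  have hdvd : p ∣ ∑ i ∈ range (p - 1), (i + 1) ^ (p - 1 - s) :=
    hshift ▸ dvd_sum_range_pow (by lia)
  refine (ratCongr.sum fun i hi ↦
    ratCongr_inv_pow (not_dvd_add_one_of_mem_range hi) hsp.le).trans ?_
  exact_mod_cast ratCongr_natCast_of_modEq (by rwa [pow_one, Nat.modEq_zero_iff_dvd])

theorem ratCongr_inv_of_add_eq {k n : ℕ} (hn : ¬ p ∣ n) (h : k + n = p) :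
    ratCongr p 1 (k : ℚ)⁻¹ (-(n : ℚ)⁻¹) := by
  have hk : ¬ p ∣ k := fun hk ↦ hn ((Nat.dvd_add_right hk).1 h.symm.dvd)
  have hk0 : k ≠ 0 := by rintro rfl; simp at hk
  have hn0 : n ≠ 0 := by rintro rfl; simp at hn
  refine ratCongr_iff_exists_pIntegers.2
    ⟨⟨_, mul_mem (inv_natCast_mem_pIntegers hn) (inv_natCast_mem_pIntegers hk)⟩, ?_⟩
  rw [sub_neg_eq_add, inv_add_inv_eq_of_add_eq hk0 hn0 h]
  ring

theorem ratCongr_inv_add_inv_of_add_eq {k n : ℕ} (hk : k ≠ 0) (hn : n ≠ 0) (h : k + n = p) :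
    ratCongr p 2 ((k : ℚ)⁻¹ + (n : ℚ)⁻¹) (p * ((n : ℚ)⁻¹ * -(n : ℚ)⁻¹)) := by
  have hpn : ¬ p ∣ n := Nat.not_dvd_of_pos_of_lt (by lia) (by lia)
  rw [inv_add_inv_eq_of_add_eq hk hn h]
  exact ((ratCongr_inv_of_add_eq hpn h).mul_left (inv_natCast_mem_pIntegers hpn)).natCast_mul

end InversePowerSums

theorem sum_range_two_mul_eq_sum_add_reflect {M : Type*} [AddCommMonoid M] (f : ℕ → M) (m : ℕ) :
    ∑ i ∈ range (2 * m), f (i + 1) = ∑ i ∈ range m, (f (2 * m - i) + f (i + 1)) := by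
  have hreflect : ∑ i ∈ range m, f (m + i + 1) = ∑ i ∈ range m, f (2 * m - i) := by
    rw [← sum_range_reflect]
    exact sum_congr rfl fun i hi ↦ congrArg f (by grind)
  rw [sum_add_distrib, ← hreflect, two_mul, sum_range_add, add_comm]

section HarmonicNumbers

variable {p : ℕ} [Fact p.Prime]

theorem ratCongr_half_sum_inv_pow {s : ℕ} (hs : 0 < s) (hsp : s < p - 1) (hse : Even s) :
    ratCongr p 1 (∑ i ∈ range (p / 2), ((i + 1 : ℕ) : ℚ)⁻¹ ^ s) 0 := by
  obtain ⟨m, hm⟩ := (Fact.out : p.Prime).odd_of_ne_two (by lia)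
  have hfull := ratCongr_sum_inv_pow hs hsp
  rw [show p - 1 = 2 * m by lia,
    sum_range_two_mul_eq_sum_add_reflect fun n ↦ (n : ℚ)⁻¹ ^ s] at hfull
  rw [show p / 2 = m by lia]
  have hpair (i : ℕ) (hi : i ∈ range m) :
      ratCongr p 1 (((2 * m - i : ℕ) : ℚ)⁻¹ ^ s) (((i + 1 : ℕ) : ℚ)⁻¹ ^ s) := by
    have hpi : ¬ p ∣ i + 1 := not_dvd_add_one_of_mem_range (by grind)
    have hpi' : ¬ p ∣ 2 * m - i := Nat.not_dvd_of_pos_of_lt (by grind) (by grind)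
    rw [← hse.neg_pow ((i + 1 : ℕ) : ℚ)⁻¹]
    exact (ratCongr_inv_of_add_eq hpi (by grind)).pow (inv_natCast_mem_pIntegers hpi')
      (neg_mem (inv_natCast_mem_pIntegers hpi)) s
  have htwo : ¬ p ∣ 2 := Nat.not_dvd_of_pos_of_lt two_pos (by lia)
  refine .of_mul_left htwo ?_
  rw [Nat.cast_two, mul_zero, mul_sum]
  refine (ratCongr.sum fun i hi ↦ ?_).trans hfull
  rw [two_mul]
  exact ((hpair i hi).add_right _).symm

theorem ratCongr_harmonic_sub_one (hp : 3 < p) : ratCongr p 2 (harmonic (p - 1)) 0 := by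
  obtain ⟨m, hm⟩ := (Fact.out : p.Prime).odd_of_ne_two (by lia)
  have hsq := ratCongr_half_sum_inv_pow (p := p) two_pos (by lia) even_two
  rw [show p / 2 = m by lia] at hsq
  rw [show p - 1 = 2 * m by lia, harmonic,
    sum_range_two_mul_eq_sum_add_reflect fun n ↦ (n : ℚ)⁻¹]
  refine (ratCongr.sum fun i hi ↦ ratCongr_inv_add_inv_of_add_eq (p := p) (by grind)
    i.succ_ne_zero (by grind)).trans ?_
  convert (hsq.mul_left (neg_mem (one_mem _))).natCast_mul using 1
  · simp only [mul_neg, ← sq, mul_sum, neg_mul, one_mul, sum_neg_distrib]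
  · ring

theorem ratCongr_two_mul_sum_of_one_add_mul_prod_eq {ι : Type*} {s : Finset ι} {x : ι → ℚ} {q : ℚ}
    (hp : p ≠ 2) (hx : ∀ i ∈ s, x i ∈ pIntegers p) (hq : q ∈ pIntegers p)
    (hsq : ratCongr p 1 (∑ i ∈ s, x i ^ 2) 0)
    (hprod : (1 + p * q) * ∏ i ∈ s, (1 - p * x i) = ∏ i ∈ s, (1 - p * (2 * x i))) :
    ratCongr p 2 (2 * ∑ i ∈ s, x i) (p * q ^ 2 - 2 * q) := by
  lift q to pIntegers p using hq
  let y (i : s) : pIntegers p := ⟨x i, hx i i.2⟩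
  have coe_two : ((2 : pIntegers p) : ℚ) = 2 := rfl
  have hreg : IsLeftRegular (p : pIntegers p) :=
    (IsRegular.of_ne_zero (by exact_mod_cast (Fact.out : p.Prime).ne_zero)).1
  have hcop : IsCoprime (p : pIntegers p) 2 := by
    exact_mod_cast ((Nat.coprime_primes Fact.out Nat.prime_two).2 hp).cast (R := pIntegers p)
  have hsq' : (p : pIntegers p) ∣ ∑ i, y i ^ 2 := by
    rw [← sum_coe_sort] at hsq
    have h : ratCongr p 1 (∑ i, y i ^ 2 : pIntegers p) (0 : pIntegers p) := by
      push_cast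
      exact hsq
    simpa using ratCongr_coe_iff_dvd.1 h
  have hprod' : (1 + p * q) * ∏ i, (1 - p * y i) = ∏ i, (1 - p * (2 * y i)) := by
    rw [← prod_coe_sort, ← prod_coe_sort s] at hprod
    apply Subtype.ext
    push_cast [coe_two]
    exact hprod
  have h := ratCongr_coe_iff_dvd.2 (sq_dvd_of_one_add_mul_prod_eq hreg hcop hsq' hprod')
  push_cast [coe_two] at h
  rwa [← sum_coe_sort]

theorem ratCongr_harmonic_half (hp : 3 < p) :
    ratCongr p 2 (harmonic (p / 2)) (p * fermatQ p ^ 2 - 2 * fermatQ p) := by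
  obtain ⟨m, hm⟩ := (Fact.out : p.Prime).odd_of_ne_two (by lia)
  have htwo : ¬ p ∣ 2 := Nat.not_dvd_of_pos_of_lt two_pos (by lia)
  have hmem (i : ℕ) (hi : i ∈ range m) : (2 * (i + 1 : ℚ))⁻¹ ∈ pIntegers p := by
    exact_mod_cast inv_natCast_mem_pIntegers (Nat.not_dvd_of_pos_of_lt (by lia) (by grind))
  have hsq : ratCongr p 1 (∑ i ∈ range m, (2 * (i + 1 : ℚ))⁻¹ ^ 2) 0 := by
    have h := ratCongr_half_sum_inv_pow (p := p) two_pos (by lia) even_two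
    rw [show p / 2 = m by lia] at h
    convert h.mul_left (pow_mem (inv_natCast_mem_pIntegers htwo) 2) using 1
    · simp [mul_sum, mul_pow, mul_comm]
    · simp
  have hprod := four_pow_mul_prod_one_sub_div_two_mul (K := ℚ) m
  have hpow : (4 : ℚ) ^ m = 1 + p * fermatQ p := by
    rw [natCast_mul_fermatQ (by lia), show p - 1 = 2 * m by lia, pow_mul]
    norm_num
  rw [hpow, show (2 * m + 1 : ℚ) = p by exact_mod_cast hm.symm] at hprod
  convert ratCongr_two_mul_sum_of_one_add_mul_prod_eq (by lia) hmem
    (fermatQ_mem_pIntegers (by lia)) hsq hprod using 1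
  rw [show p / 2 = m by lia, harmonic, mul_sum]
  exact sum_congr rfl fun i _ ↦ by push_cast; field_simp

end HarmonicNumbers

theorem sum_inv_mul_two_mul_sub_one (m : ℕ) :
    ∑ k ∈ Icc 1 m, 1 / ((k : ℚ) * (2 * k - 1)) = 2 * (harmonic (2 * m) - harmonic m) := by
  induction m with
  | zero => simp
  | succ m ih =>
    rw [sum_Icc_succ_top (by lia), ih, mul_add_one, harmonic_succ, harmonic_succ, harmonic_succ]
    push_cast
    have : (2 * (m + 1) - 1 : ℚ) ≠ 0 := by
      rw [show (2 * (m + 1) - 1 : ℚ) = 2 * m + 1 by ring]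
      positivity
    field_simp
    ring

theorem sum_inv_k_2k_sub_one (p : ℕ) (hp : p.Prime) (hp3 : 3 < p) :
    ratCongr p 2
      (∑ k ∈ Finset.Icc 1 ((p - 1) / 2), 1 / ((k : ℚ) * (2 * k - 1)))
      (4 * fermatQ p - 2 * p * fermatQ p ^ 2) := by
  have : Fact p.Prime := ⟨hp⟩
  obtain ⟨m, hm⟩ := hp.odd_of_ne_two (by lia)
  have hfull := ratCongr_harmonic_sub_one hp3
  have hhalf := ratCongr_harmonic_half hp3
  rw [show p - 1 = 2 * m by lia] at hfull
  rw [show p / 2 = m by lia] at hhalf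
  rw [show (p - 1) / 2 = m by lia, sum_inv_mul_two_mul_sub_one]
  convert (hfull.sub hhalf).mul_left (ofNat_mem _ 2) using 1
  ring
end
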